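/- (Equality condition in Hölder's inequality.) Let p, q ∈ (1, ∞) and r ≥ 1 be real numbers with 1/r = 1/p + 1/q, and let x, y be n×n positive semidefinite complex matrices. If Tr(|x·y|^r)^{1/r} = Tr(x^p)^{1/p} · Tr(y^q)^{1/q}, where |x·y| := ((x·y)* (x·y))^{1/2}, then there exists λ ≥ 0 such that x^p = λ · y^q or y^q = λ · x^p. -/

import Mathlib

open Matrix
open scoped ComplexOrder

/-- Real power of a positive semidefinite matrix via the spectral decomposition,
applying `x ^ t` (real `rpow`, so with the convention `0 ^ t = 0` for `t ≠ 0`)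
to the eigenvalues; returns `0` if the matrix is not Hermitian. -/
noncomputable def mpow {n : Type*} [Fintype n] [DecidableEq n]
    (A : Matrix n n ℂ) (t : ℝ) : Matrix n n ℂ :=
  if hA : A.IsHermitian then
    (hA.eigenvectorUnitary : Matrix n n ℂ) *
      Matrix.diagonal (fun i => ((hA.eigenvalues i ^ t : ℝ) : ℂ)) *
      star (hA.eigenvectorUnitary : Matrix n n ℂ)
  else 0

/-! By homogeneity we may assume `Tr (x ^ p) = Tr (y ^ q) = Tr (|x * y| ^ r) = 1`. Let `K` be a
contraction with `K * (x * y) = |x * y|`, and put `b = |x * y|`. The function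
`Tr (b ^ (r z) * K * x ^ (r (1 - z)) * y ^ (r (1 - z)))` is bounded by `1` on the boundary of the
strip `0 ≤ Re z ≤ 1` and equals `Tr (b ^ r) = 1` at `z = 1 - 1 / r`; by the maximum modulus
principle it equals `1` at `z = 0` (which is that same point if `r = 1`). Its value at `z = 0` is
also a value of `Tr (L * x ^ (p z) * y ^ (q (1 - z)))` at an interior point of the strip, for a
contraction `L`, so that this second function is constantly `1`. At `z = 1 / 2` this is equality in
the Cauchy–Schwarz inequality for `x ^ (p / 2)` and `y ^ (q / 2)`, which forces `x ^ p = y ^ q`. -/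

section ThreeLines

open Complex.HadamardThreeLines

variable {E : Type*} [NormedAddCommGroup E] [NormedSpace ℂ E] {f : ℂ → E} {C : ℝ}

lemma norm_le_of_mem_verticalClosedStrip (hd : DiffContOnCl ℂ f (verticalStrip 0 1))
    (hB : BddAbove ((norm ∘ f) '' verticalClosedStrip 0 1))
    (h₀ : ∀ z : ℂ, z.re = 0 → ‖f z‖ ≤ C) (h₁ : ∀ z : ℂ, z.re = 1 → ‖f z‖ ≤ C)
    {z : ℂ} (hz : z ∈ verticalClosedStrip 0 1) : ‖f z‖ ≤ C := by
  have hC : 0 ≤ C := (norm_nonneg _).trans (h₀ 0 Complex.zero_re)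
  calc ‖f z‖ ≤ C ^ (1 - z.re) * C ^ z.re :=
        norm_le_interp_of_mem_verticalClosedStrip₀₁' f hz hd hB h₀ h₁
    _ = C := by
        rw [← Real.rpow_add_of_nonneg hC (sub_nonneg.2 hz.2) hz.1, sub_add_cancel, Real.rpow_one]

lemma eqOn_verticalClosedStrip_of_norm_eq [StrictConvexSpace ℝ E]
    (hd : DiffContOnCl ℂ f (verticalStrip 0 1))
    (hB : BddAbove ((norm ∘ f) '' verticalClosedStrip 0 1))
    (h₀ : ∀ z : ℂ, z.re = 0 → ‖f z‖ ≤ C) (h₁ : ∀ z : ℂ, z.re = 1 → ‖f z‖ ≤ C)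
    {c : ℂ} (hc : c ∈ verticalStrip 0 1) (hfc : ‖f c‖ = C) :
    Set.EqOn f (Function.const ℂ (f c)) (verticalClosedStrip 0 1) := by
  have hmax : IsMaxOn (norm ∘ f) (verticalStrip 0 1) c := fun z hz =>
    (norm_le_of_mem_verticalClosedStrip hd hB h₀ h₁ ⟨hz.1.le, hz.2.le⟩).trans_eq hfc.symm
  have hclosure : closure (verticalStrip 0 1) = verticalClosedStrip 0 1 := by
    rw [verticalStrip, Complex.closure_preimage_re, closure_Ioo zero_ne_one, verticalClosedStrip]
  rw [← hclosure]
  exact Complex.eqOn_closure_of_isPreconnected_of_isMaxOn_norm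
    ((convex_Ioo (0 : ℝ) 1).linear_preimage Complex.reLm).isPreconnected
    (isOpen_Ioo.preimage Complex.continuous_re) hd hc hmax

end ThreeLines

/-- The complex power `a ^ z` of a real number with the convention `0 ^ z = 0` for every `z`,
including `z = 0`: this makes it holomorphic in `z` for each fixed `a`. -/
noncomputable def supportCPow (a : ℝ) (z : ℂ) : ℂ :=
  if a = 0 then 0 else (a : ℂ) ^ z

lemma supportCPow_mul_supportCPow (a : ℝ) (z w : ℂ) :
    supportCPow a z * supportCPow a w = supportCPow a (z + w) := by
  unfold supportCPow
  split_ifs with ha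
  · exact mul_zero 0
  · rw [Complex.cpow_add _ _ (Complex.ofReal_ne_zero.2 ha)]

lemma supportCPow_one (a : ℝ) : supportCPow a 1 = a := by
  unfold supportCPow
  split_ifs with ha
  · rw [ha, Complex.ofReal_zero]
  · exact Complex.cpow_one _

lemma supportCPow_ofReal {a t : ℝ} (ha : 0 ≤ a) (ht : t ≠ 0) :
    supportCPow a t = ((a ^ t : ℝ) : ℂ) := by
  unfold supportCPow
  split_ifs with h
  · rw [h, Real.zero_rpow ht, Complex.ofReal_zero]
  · rw [Complex.ofReal_cpow ha]

lemma norm_supportCPow_le {a : ℝ} (ha : 0 ≤ a) (z : ℂ) : ‖supportCPow a z‖ ≤ a ^ z.re := by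
  unfold supportCPow
  split_ifs with h
  · rw [norm_zero]
    exact Real.rpow_nonneg ha _
  · exact (Complex.norm_cpow_eq_rpow_re_of_pos (lt_of_le_of_ne' ha h) z).le

lemma star_supportCPow {a : ℝ} (ha : 0 ≤ a) (z : ℂ) :
    star (supportCPow a z) = supportCPow a (star z) := by
  unfold supportCPow
  split_ifs
  · exact star_zero ℂ
  · have harg : (a : ℂ).arg ≠ Real.pi :=
      (Complex.arg_ofReal_of_nonneg ha).trans_ne Real.pi_ne_zero.symm
    have hconj := Complex.cpow_conj (a : ℂ) z harg
    rw [Complex.conj_ofReal] at hconj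
    exact hconj.symm

lemma differentiable_supportCPow (a : ℝ) : Differentiable ℂ (supportCPow a) := by
  unfold supportCPow
  split_ifs with ha
  · exact differentiable_const 0
  · intro z
    exact differentiableAt_id.const_cpow (Or.inl (Complex.ofReal_ne_zero.2 ha))

section RealPower

variable {m : Type*} [Fintype m] [DecidableEq m] {A : Matrix m m ℂ}

lemma mpow_eq_cfc (hA : A.IsHermitian) (t : ℝ) : mpow A t = cfc (fun a : ℝ => a ^ t) A := by
  rw [mpow, dif_pos hA, hA.cfc_eq]
  rfl

lemma mpow_smul (hA : A.PosSemidef) {c : ℝ} (hc : 0 ≤ c) (t : ℝ) :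
    mpow (c • A) t = c ^ t • mpow A t := by
  have hcA : (c • A).IsHermitian := (hA.smul hc).isHermitian
  have hmul : Set.EqOn (fun a : ℝ => (c • a) ^ t) (fun a => c ^ t • a ^ t) (spectrum ℝ A) := by
    intro a ha
    rw [hA.isHermitian.spectrum_real_eq_range_eigenvalues] at ha
    obtain ⟨i, rfl⟩ := ha
    exact Real.mul_rpow hc (hA.eigenvalues_nonneg i)
  have hfin : ContinuousOn (fun a : ℝ => a ^ t) ((c • ·) '' spectrum ℝ A) :=
    (A.finite_real_spectrum.image _).continuousOn _
  calc mpow (c • A) t = cfc (fun a : ℝ => a ^ t) (c • A) := mpow_eq_cfc hcA t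
    _ = cfc (fun a : ℝ => (c • a) ^ t) A :=
        (cfc_comp_smul c (fun a : ℝ => a ^ t) A hfin hA.isHermitian).symm
    _ = cfc (fun a : ℝ => c ^ t • a ^ t) A := cfc_congr hmul
    _ = c ^ t • cfc (fun a : ℝ => a ^ t) A :=
        cfc_smul _ _ _ (A.finite_real_spectrum.continuousOn _)
    _ = c ^ t • mpow A t := by rw [mpow_eq_cfc hA.isHermitian]

end RealPower

section Contractions

lemma norm_mul_le_one {R : Type*} [NonUnitalSeminormedRing R] {a b : R} (ha : ‖a‖ ≤ 1)
    (hb : ‖b‖ ≤ 1) : ‖a * b‖ ≤ 1 :=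
  (norm_mul_le a b).trans (mul_le_one₀ ha (norm_nonneg b) hb)

open scoped Matrix.Norms.L2Operator

lemma differentiable_trace {m 𝕜 : Type*} [Fintype m] [RCLike 𝕜] :
    Differentiable 𝕜 (trace : Matrix m m 𝕜 → 𝕜) := by
  classical exact (traceLinearMap m 𝕜 𝕜).toContinuousLinearMap.differentiable

variable {m : Type*} [Fintype m] [DecidableEq m]

lemma norm_entry_le_l2_opNorm {k l : Type*} [Fintype k] [Fintype l] [DecidableEq l]
    {𝕜 : Type*} [RCLike 𝕜] (A : Matrix k l 𝕜) (i : k) (j : l) : ‖A i j‖ ≤ ‖A‖ := by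
  calc ‖A i j‖ = ‖(EuclideanSpace.equiv k 𝕜).symm (A *ᵥ EuclideanSpace.single j (1 : 𝕜)) i‖ := by
        simp
    _ ≤ ‖(EuclideanSpace.equiv k 𝕜).symm (A *ᵥ EuclideanSpace.single j (1 : 𝕜))‖ :=
        PiLp.norm_apply_le _ i
    _ ≤ ‖A‖ * ‖EuclideanSpace.single j (1 : 𝕜)‖ := l2_opNorm_mulVec A _
    _ = ‖A‖ := by rw [PiLp.norm_single, norm_one, mul_one]

lemma norm_trace_le_card_mul_l2_opNorm {𝕜 : Type*} [RCLike 𝕜] (A : Matrix m m 𝕜) :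
    ‖A.trace‖ ≤ Fintype.card m * ‖A‖ := by
  calc ‖A.trace‖ ≤ ∑ i, ‖A i i‖ := norm_sum_le _ _
    _ ≤ ∑ _i : m, ‖A‖ := Finset.sum_le_sum fun i _ => norm_entry_le_l2_opNorm A i i
    _ = Fintype.card m * ‖A‖ := by rw [Finset.sum_const, Finset.card_univ, nsmul_eq_mul]

lemma bddAbove_norm_trace_of_norm_le_one {ι 𝕜 : Type*} [RCLike 𝕜] {S : Set ι}
    {G : ι → Matrix m m 𝕜} (hG : ∀ z ∈ S, ‖G z‖ ≤ 1) :
    BddAbove ((norm ∘ fun z => (G z).trace) '' S) := by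
  refine ⟨Fintype.card m, ?_⟩
  rintro _ ⟨z, hz, rfl⟩
  exact (norm_trace_le_card_mul_l2_opNorm _).trans
    (mul_le_of_le_one_right (Nat.cast_nonneg _) (hG z hz))

open scoped MatrixOrder in
lemma posSemidef_one_sub_conjTranspose_mul_self {K : Matrix m m ℂ} (hK : ‖K‖ ≤ 1) :
    (1 - Kᴴ * K).PosSemidef := by
  have hle : star K * K ≤ 1 :=
    calc star K * K ≤ algebraMap ℝ _ (‖K‖ ^ 2) := CStarAlgebra.star_mul_le_algebraMap_norm_sq
      _ ≤ algebraMap ℝ _ 1 := algebraMap_mono _ (pow_le_one₀ (norm_nonneg K) hK)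
      _ = 1 := map_one _
  exact Matrix.le_iff.1 hle

-- The equality case of the Cauchy–Schwarz inequality for `⟪(K * a)ᴴ, b⟫`, followed by that of
-- `‖K * a‖₂ ≤ ‖a‖₂`.
lemma conjTranspose_mul_self_eq_mul_conjTranspose_self_of_trace_eq {K a b : Matrix m m ℂ}
    (hK : ‖K‖ ≤ 1) (ha : (aᴴ * a).trace = (K * a * b).trace)
    (hb : (b * bᴴ).trace = (K * a * b).trace) : aᴴ * a = b * bᴴ := by
  have hgap : (aᴴ * (1 - Kᴴ * K) * a).PosSemidef :=
    (posSemidef_one_sub_conjTranspose_mul_self hK).conjTranspose_mul_mul_same a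
  have hgap_eq : aᴴ * (1 - Kᴴ * K) * a = aᴴ * a - (K * a)ᴴ * (K * a) := by
    rw [conjTranspose_mul]
    noncomm_ring
  have hba : (bᴴ * (K * a)ᴴ).trace = (aᴴ * a).trace := by
    rw [← conjTranspose_mul, trace_conjTranspose, ← ha, ← trace_conjTranspose, conjTranspose_mul,
      conjTranspose_conjTranspose]
  have hdiff : ((b - (K * a)ᴴ) * (b - (K * a)ᴴ)ᴴ).trace = -(aᴴ * (1 - Kᴴ * K) * a).trace := by
    rw [hgap_eq, conjTranspose_sub, conjTranspose_conjTranspose, sub_mul, mul_sub, mul_sub,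
      trace_sub, trace_sub, trace_sub, trace_sub, trace_mul_comm b (K * a),
      trace_mul_comm (K * a)ᴴ bᴴ, hba, hb]
    ring
  have hgap_zero : (aᴴ * (1 - Kᴴ * K) * a).trace = 0 := by
    refine le_antisymm (neg_nonneg.1 ?_) hgap.trace_nonneg
    rw [← hdiff]
    exact (posSemidef_self_mul_conjTranspose _).trace_nonneg
  have hbK : b = (K * a)ᴴ := by
    rw [hgap_zero, neg_zero, trace_mul_conjTranspose_self_eq_zero_iff] at hdiff
    exact sub_eq_zero.1 hdiff
  rw [hgap.trace_eq_zero_iff, hgap_eq] at hgap_zero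
  rw [sub_eq_zero.1 hgap_zero, hbK, conjTranspose_conjTranspose]

end Contractions

section ComplexPower

variable {m : Type*} [Fintype m] [DecidableEq m] {A : Matrix m m ℂ}

/-- The complex power of a positive semidefinite matrix: `supportCPow · z` applied to the
eigenvalues, so that `mcpow A 0` is the support projection. Like `mpow` it is `0` if the matrix is
not Hermitian. -/
noncomputable def mcpow (A : Matrix m m ℂ) (z : ℂ) : Matrix m m ℂ :=
  if hA : A.IsHermitian then
    Unitary.conjStarAlgAut ℂ _ hA.eigenvectorUnitary
      (diagonal fun i => supportCPow (hA.eigenvalues i) z)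
  else 0

lemma mcpow_of_isHermitian (hA : A.IsHermitian) (z : ℂ) :
    mcpow A z = Unitary.conjStarAlgAut ℂ _ hA.eigenvectorUnitary
      (diagonal fun i => supportCPow (hA.eigenvalues i) z) :=
  dif_pos hA

lemma mcpow_mul_mcpow (A : Matrix m m ℂ) (z w : ℂ) :
    mcpow A z * mcpow A w = mcpow A (z + w) := by
  unfold mcpow
  split_ifs with hA
  · simp only [← map_mul, diagonal_mul_diagonal, supportCPow_mul_supportCPow]
  · exact mul_zero 0

lemma mcpow_one (hA : A.IsHermitian) : mcpow A 1 = A := by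
  simp only [mcpow_of_isHermitian hA, supportCPow_one]
  exact hA.spectral_theorem.symm

lemma mcpow_ofReal (hA : A.PosSemidef) {t : ℝ} (ht : t ≠ 0) : mcpow A t = mpow A t := by
  simp only [mcpow_of_isHermitian hA.isHermitian,
    supportCPow_ofReal (hA.eigenvalues_nonneg _) ht, Unitary.conjStarAlgAut_apply]
  rw [mpow, dif_pos hA.isHermitian]

lemma conjTranspose_mcpow (hA : A.PosSemidef) (z : ℂ) : (mcpow A z)ᴴ = mcpow A (star z) := by
  simp only [mcpow_of_isHermitian hA.isHermitian, ← star_eq_conjTranspose, ← map_star]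
  simp only [star_eq_conjTranspose, diagonal_conjTranspose, Pi.star_def,
    star_supportCPow (hA.eigenvalues_nonneg _)]

lemma posSemidef_mpow (hA : A.PosSemidef) (t : ℝ) : (mpow A t).PosSemidef := by
  rw [mpow, dif_pos hA.isHermitian, star_eq_conjTranspose]
  refine (posSemidef_diagonal_iff.2 fun i => ?_).mul_mul_conjTranspose_same _
  exact Complex.zero_le_real.2 (Real.rpow_nonneg (hA.eigenvalues_nonneg i) t)

lemma trace_mpow (hA : A.IsHermitian) (t : ℝ) :
    (mpow A t).trace = ((∑ i, hA.eigenvalues i ^ t : ℝ) : ℂ) := by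
  rw [mpow, dif_pos hA, trace_mul_cycle, Unitary.coe_star_mul_self, one_mul,
    trace_diagonal, Complex.ofReal_sum]

open scoped Matrix.Norms.L2Operator

lemma differentiable_mcpow (A : Matrix m m ℂ) : Differentiable ℂ (mcpow A) := by
  by_cases hA : A.IsHermitian
  · let L : (m → ℂ) →ₗ[ℂ] Matrix m m ℂ :=
      (Unitary.conjStarAlgAut ℂ _ hA.eigenvectorUnitary).toAlgEquiv.toLinearMap ∘ₗ
        diagonalLinearMap m ℂ ℂ
    have hL : mcpow A = fun z => L.toContinuousLinearMap
        fun i => supportCPow (hA.eigenvalues i) z := by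
      funext z
      exact mcpow_of_isHermitian hA z
    rw [hL]
    exact L.toContinuousLinearMap.differentiable.comp
      (differentiable_pi.2 fun i => differentiable_supportCPow _)
  · have hzero : mcpow A = fun _ => 0 := funext fun z => dif_neg hA
    rw [hzero]
    exact differentiable_const 0

lemma l2_opNorm_eq_norm_eigenvalues (hA : A.IsHermitian) : ‖A‖ = ‖hA.eigenvalues‖ := by
  conv_lhs => rw [hA.spectral_theorem]
  rw [StarAlgEquiv.norm_map, l2_opNorm_diagonal]
  simp [Pi.norm_def]

lemma norm_mcpow_le_rpow (hA : A.PosSemidef) {z : ℂ} (hz : 0 ≤ z.re) :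
    ‖mcpow A z‖ ≤ ‖A‖ ^ z.re := by
  rw [mcpow_of_isHermitian hA.isHermitian, StarAlgEquiv.norm_map, l2_opNorm_diagonal,
    pi_norm_le_iff_of_nonneg (by positivity)]
  intro i
  have hle : hA.isHermitian.eigenvalues i ≤ ‖A‖ := by
    rw [l2_opNorm_eq_norm_eigenvalues hA.isHermitian]
    exact (le_abs_self _).trans (norm_le_pi_norm hA.isHermitian.eigenvalues i)
  exact (norm_supportCPow_le (hA.eigenvalues_nonneg i) z).trans
    (Real.rpow_le_rpow (hA.eigenvalues_nonneg i) hle hz)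

lemma norm_mcpow_le_one (hA : A.PosSemidef) (hA1 : ‖A‖ ≤ 1) {z : ℂ} (hz : 0 ≤ z.re) :
    ‖mcpow A z‖ ≤ 1 :=
  (norm_mcpow_le_rpow hA hz).trans (Real.rpow_le_one (norm_nonneg A) hA1 hz)

lemma norm_le_one_of_trace_mpow_eq_one (hA : A.PosSemidef) {p : ℝ} (hp : 0 < p)
    (htr : (mpow A p).trace = 1) : ‖A‖ ≤ 1 := by
  rw [trace_mpow hA.isHermitian, Complex.ofReal_eq_one] at htr
  rw [l2_opNorm_eq_norm_eigenvalues hA.isHermitian, pi_norm_le_iff_of_nonneg zero_le_one]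
  intro i
  have hi := hA.eigenvalues_nonneg i
  rw [Real.norm_of_nonneg hi]
  by_contra! hlt
  refine (Real.one_lt_rpow hlt hp).not_ge (htr ▸ ?_)
  exact Finset.single_le_sum (f := fun i => hA.isHermitian.eigenvalues i ^ p)
    (fun j _ => Real.rpow_nonneg (hA.eigenvalues_nonneg j) p) (Finset.mem_univ i)

lemma norm_trace_mul_mcpow_le (hA : A.PosSemidef) (M : Matrix m m ℂ) (z : ℂ) :
    ‖(M * mcpow A z).trace‖ ≤ ‖M‖ * (mpow A z.re).trace.re := by
  have hU := hA.isHermitian.eigenvectorUnitary.2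
  set U := (hA.isHermitian.eigenvectorUnitary : Matrix m m ℂ) with hUdef
  have htrace : (M * mcpow A z).trace =
      ∑ i, (star U * M * U) i i * supportCPow (hA.isHermitian.eigenvalues i) z := by
    rw [mcpow_of_isHermitian hA.isHermitian, Unitary.conjStarAlgAut_apply, ← hUdef, ← mul_assoc,
      ← mul_assoc, trace_mul_comm, ← mul_assoc, ← mul_assoc]
    simp only [trace, diag_apply, mul_diagonal]
  have hM : ‖star U * M * U‖ = ‖M‖ := by
    rw [CStarRing.norm_mul_mem_unitary _ hU, CStarRing.norm_mem_unitary_mul _ (Unitary.star_mem hU)]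
  rw [htrace, trace_mpow hA.isHermitian, Complex.ofReal_re, Finset.mul_sum, ← hM]
  refine norm_sum_le_of_le _ fun i _ => ?_
  rw [norm_mul]
  exact mul_le_mul (norm_entry_le_l2_opNorm _ i i) (norm_supportCPow_le (hA.eigenvalues_nonneg i) z)
    (norm_nonneg _) (norm_nonneg _)

end ComplexPower

section Holder

open scoped Matrix.Norms.L2Operator
open Complex.HadamardThreeLines

variable {m : Type*} [Fintype m] [DecidableEq m] {x y b K : Matrix m m ℂ} {p q r : ℝ}

lemma norm_trace_mul_mcpow_le_one (hx : x.PosSemidef) (hxp : (mpow x p).trace = 1)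
    {z : ℂ} (hz : z.re = p) (hK : ‖K‖ ≤ 1) : ‖(K * mcpow x z).trace‖ ≤ 1 := by
  refine (norm_trace_mul_mcpow_le hx K z).trans ?_
  rwa [hz, hxp, Complex.one_re, mul_one]

lemma norm_mcpow_le_one_of_re_eq_zero (hx : x.PosSemidef) {z : ℂ} (hz : z.re = 0) :
    ‖mcpow x z‖ ≤ 1 :=
  (norm_mcpow_le_rpow hx hz.ge).trans_eq (by rw [hz, Real.rpow_zero])

/-- The analytic family interpolating between `y ^ q` at `z = 0` and `x ^ p` at `z = 1`. -/
noncomputable def pairInterp (K x y : Matrix m m ℂ) (p q : ℝ) (z : ℂ) : Matrix m m ℂ :=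
  K * mcpow x (p * z) * mcpow y (q * (1 - z))

lemma differentiable_trace_pairInterp (K x y : Matrix m m ℂ) (p q : ℝ) :
    Differentiable ℂ fun z => (pairInterp K x y p q z).trace := by
  unfold pairInterp
  have hx := differentiable_mcpow x
  have hy := differentiable_mcpow y
  have htrace := differentiable_trace (m := m) (𝕜 := ℂ)
  fun_prop

lemma norm_pairInterp_le_one (hx : x.PosSemidef) (hy : y.PosSemidef) (hp : 0 < p)
    (hq : 0 < q) (hxp : (mpow x p).trace = 1) (hyq : (mpow y q).trace = 1) (hK : ‖K‖ ≤ 1) {z : ℂ}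
    (hz : z ∈ verticalClosedStrip 0 1) : ‖pairInterp K x y p q z‖ ≤ 1 := by
  have hx₁ := norm_le_one_of_trace_mpow_eq_one hx hp hxp
  have hy₁ := norm_le_one_of_trace_mpow_eq_one hy hq hyq
  refine norm_mul_le_one (norm_mul_le_one hK (norm_mcpow_le_one hx hx₁ ?_))
    (norm_mcpow_le_one hy hy₁ ?_)
  · simpa using mul_nonneg hp.le hz.1
  · simpa using mul_nonneg hq.le (sub_nonneg.2 hz.2)

lemma norm_trace_pairInterp_le_one_of_re_eq_zero (hx : x.PosSemidef) (hy : y.PosSemidef)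
    (hyq : (mpow y q).trace = 1) (hK : ‖K‖ ≤ 1) {z : ℂ} (hz : z.re = 0) :
    ‖(pairInterp K x y p q z).trace‖ ≤ 1 := by
  refine norm_trace_mul_mcpow_le_one hy hyq (by simp [hz]) (norm_mul_le_one hK ?_)
  exact norm_mcpow_le_one_of_re_eq_zero hx (by simp [hz])

lemma norm_trace_pairInterp_le_one_of_re_eq_one (hx : x.PosSemidef) (hy : y.PosSemidef)
    (hxp : (mpow x p).trace = 1) (hK : ‖K‖ ≤ 1) {z : ℂ} (hz : z.re = 1) :
    ‖(pairInterp K x y p q z).trace‖ ≤ 1 := by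
  rw [pairInterp, trace_mul_cycle]
  refine norm_trace_mul_mcpow_le_one hx hxp (by simp [hz]) (norm_mul_le_one ?_ hK)
  exact norm_mcpow_le_one_of_re_eq_zero hy (by simp [hz])

lemma norm_trace_pairInterp_le_one (hx : x.PosSemidef) (hy : y.PosSemidef) (hp : 0 < p)
    (hq : 0 < q) (hxp : (mpow x p).trace = 1) (hyq : (mpow y q).trace = 1) (hK : ‖K‖ ≤ 1) {z : ℂ}
    (hz : z ∈ verticalClosedStrip 0 1) : ‖(pairInterp K x y p q z).trace‖ ≤ 1 :=
  norm_le_of_mem_verticalClosedStrip (differentiable_trace_pairInterp K x y p q).diffContOnCl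
    (bddAbove_norm_trace_of_norm_le_one fun _ => norm_pairInterp_le_one hx hy hp hq hxp hyq hK)
    (fun _ => norm_trace_pairInterp_le_one_of_re_eq_zero hx hy hyq hK)
    (fun _ => norm_trace_pairInterp_le_one_of_re_eq_one hx hy hxp hK) hz

lemma trace_pairInterp_eq_one (hx : x.PosSemidef) (hy : y.PosSemidef) (hp : 0 < p)
    (hq : 0 < q) (hxp : (mpow x p).trace = 1) (hyq : (mpow y q).trace = 1) (hK : ‖K‖ ≤ 1) {c z : ℂ}
    (hc : c ∈ verticalStrip 0 1) (hKc : (pairInterp K x y p q c).trace = 1)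
    (hz : z ∈ verticalClosedStrip 0 1) : (pairInterp K x y p q z).trace = 1 :=
  (eqOn_verticalClosedStrip_of_norm_eq (differentiable_trace_pairInterp K x y p q).diffContOnCl
    (bddAbove_norm_trace_of_norm_le_one fun _ => norm_pairInterp_le_one hx hy hp hq hxp hyq hK)
    (fun _ => norm_trace_pairInterp_le_one_of_re_eq_zero hx hy hyq hK)
    (fun _ => norm_trace_pairInterp_le_one_of_re_eq_one hx hy hxp hK)
    hc (by rw [hKc, norm_one]) hz).trans hKc

lemma mpow_half_mul_mpow_half (hx : x.PosSemidef) (hp : 0 < p) :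
    mpow x (p / 2) * mpow x (p / 2) = mpow x p := by
  rw [← mcpow_ofReal hx (half_pos hp).ne', mcpow_mul_mcpow, ← Complex.ofReal_add, add_halves,
    mcpow_ofReal hx hp.ne']

-- Moving the equality to `z = 1 / 2`, where both factors have unit Hilbert–Schmidt norm, reduces it
-- to the equality case of Cauchy–Schwarz.
lemma mpow_eq_mpow_of_trace_pairInterp_eq_one (hx : x.PosSemidef) (hy : y.PosSemidef) (hp : 0 < p)
    (hq : 0 < q) (hxp : (mpow x p).trace = 1) (hyq : (mpow y q).trace = 1) (hK : ‖K‖ ≤ 1) {c : ℂ}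
    (hc : c ∈ verticalStrip 0 1) (hKc : (pairInterp K x y p q c).trace = 1) :
    mpow x p = mpow y q := by
  have hx_half : (mpow x (p / 2))ᴴ * mpow x (p / 2) = mpow x p := by
    rw [(posSemidef_mpow hx _).isHermitian.eq, mpow_half_mul_mpow_half hx hp]
  have hy_half : mpow y (q / 2) * (mpow y (q / 2))ᴴ = mpow y q := by
    rw [(posSemidef_mpow hy _).isHermitian.eq, mpow_half_mul_mpow_half hy hq]
  have hmid : pairInterp K x y p q (1 / 2) = K * mpow x (p / 2) * mpow y (q / 2) := by
    rw [pairInterp, ← mcpow_ofReal hx (half_pos hp).ne', ← mcpow_ofReal hy (half_pos hq).ne']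
    push_cast
    congr 3 <;> ring
  have hmid_trace := trace_pairInterp_eq_one hx hy hp hq hxp hyq hK hc hKc (z := 1 / 2)
    ⟨by norm_num, by norm_num⟩
  rw [hmid] at hmid_trace
  rw [← hx_half, ← hy_half]
  apply conjTranspose_mul_self_eq_mul_conjTranspose_self_of_trace_eq hK
  · rw [hx_half, hxp, hmid_trace]
  · rw [hy_half, hyq, hmid_trace]

/-- The analytic family interpolating between `K * x ^ r * y ^ r`, up to a contraction, at `z = 0`
and `b ^ r` at `z = 1`; it passes through `b ^ (r - 1) * K * x * y` at `z = 1 - 1 / r`. -/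
noncomputable def tripleInterp (b K x y : Matrix m m ℂ) (r : ℝ) (z : ℂ) : Matrix m m ℂ :=
  mcpow b (r * z) * K * mcpow x (r * (1 - z)) * mcpow y (r * (1 - z))

lemma differentiable_trace_tripleInterp (b K x y : Matrix m m ℂ) (r : ℝ) :
    Differentiable ℂ fun z => (tripleInterp b K x y r z).trace := by
  unfold tripleInterp
  have hb := differentiable_mcpow b
  have hx := differentiable_mcpow x
  have hy := differentiable_mcpow y
  have htrace := differentiable_trace (m := m) (𝕜 := ℂ)
  fun_prop

lemma norm_tripleInterp_le_one (hb : b.PosSemidef) (hx : x.PosSemidef) (hy : y.PosSemidef)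
    (hb₁ : ‖b‖ ≤ 1) (hx₁ : ‖x‖ ≤ 1) (hy₁ : ‖y‖ ≤ 1) (hr : 0 ≤ r) (hK : ‖K‖ ≤ 1) {z : ℂ}
    (hz : z ∈ verticalClosedStrip 0 1) : ‖tripleInterp b K x y r z‖ ≤ 1 := by
  have hz_left : 0 ≤ (r * z : ℂ).re := by simpa using mul_nonneg hr hz.1
  have hz_right : 0 ≤ (r * (1 - z) : ℂ).re := by simpa using mul_nonneg hr (sub_nonneg.2 hz.2)
  exact norm_mul_le_one (norm_mul_le_one (norm_mul_le_one (norm_mcpow_le_one hb hb₁ hz_left) hK)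
    (norm_mcpow_le_one hx hx₁ hz_right)) (norm_mcpow_le_one hy hy₁ hz_right)

lemma norm_trace_tripleInterp_le_one_of_re_eq_one (hb : b.PosSemidef) (hx : x.PosSemidef)
    (hy : y.PosSemidef) (hbr : (mpow b r).trace = 1) (hK : ‖K‖ ≤ 1) {z : ℂ} (hz : z.re = 1) :
    ‖(tripleInterp b K x y r z).trace‖ ≤ 1 := by
  rw [tripleInterp, mul_assoc, mul_assoc, trace_mul_comm]
  refine norm_trace_mul_mcpow_le_one hb hbr (by simp [hz])
    (norm_mul_le_one hK (norm_mul_le_one ?_ ?_))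
  · exact norm_mcpow_le_one_of_re_eq_zero hx (by simp [hz])
  · exact norm_mcpow_le_one_of_re_eq_zero hy (by simp [hz])

-- The imaginary part of the exponent of `y` that does not fit `pairInterp` is absorbed, together
-- with the imaginary power of `b`, into the contraction.
lemma trace_tripleInterp_eq_trace_pairInterp (hp : p ≠ 0) (hq : q ≠ 0)
    (hpqr : r / p + r / q = 1) (z : ℂ) :
    (tripleInterp b K x y r z).trace =
      (pairInterp (mcpow y (-q * z) * mcpow b (r * z) * K) x y p q (r / p * (1 - z))).trace := by
  have hpc : (p : ℂ) ≠ 0 := Complex.ofReal_ne_zero.2 hp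
  have hpqr' : (r : ℂ) = q - q * (r / p) := by
    have : r = q - q * (r / p) := by
      field_simp at hpqr ⊢
      linarith
    exact_mod_cast this
  have hx_exp : (p : ℂ) * (r / p * (1 - z)) = r * (1 - z) := by field_simp
  have hy_exp : (r : ℂ) * (1 - z) = q * (1 - r / p * (1 - z)) + -q * z := by
    linear_combination (1 - z) * hpqr'
  have hy_split : mcpow y (r * (1 - z)) =
      mcpow y (q * (1 - r / p * (1 - z))) * mcpow y (-q * z) := by rw [mcpow_mul_mcpow, hy_exp]
  rw [tripleInterp, pairInterp, hx_exp, hy_split, ← mul_assoc, trace_mul_comm]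
  simp only [mul_assoc]

lemma norm_trace_tripleInterp_le_one_of_re_eq_zero (hb : b.PosSemidef) (hx : x.PosSemidef)
    (hy : y.PosSemidef) (hp : 0 < p) (hq : 0 < q) (hr : 0 < r) (hpqr : r / p + r / q = 1)
    (hxp : (mpow x p).trace = 1) (hyq : (mpow y q).trace = 1) (hK : ‖K‖ ≤ 1) {z : ℂ}
    (hz : z.re = 0) : ‖(tripleInterp b K x y r z).trace‖ ≤ 1 := by
  have hs : r / p ≤ 1 := by linarith [div_pos hr hq]
  have hre : ((r / p : ℂ) * (1 - z)).re = r / p := by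
    rw [← Complex.ofReal_div, Complex.re_ofReal_mul, Complex.sub_re, Complex.one_re, hz, sub_zero,
      mul_one]
  rw [trace_tripleInterp_eq_trace_pairInterp hp.ne' hq.ne' hpqr]
  refine norm_trace_pairInterp_le_one hx hy hp hq hxp hyq
    (norm_mul_le_one (norm_mul_le_one ?_ ?_) hK) ⟨?_, ?_⟩
  · exact norm_mcpow_le_one_of_re_eq_zero hy (by simp [hz])
  · exact norm_mcpow_le_one_of_re_eq_zero hb (by simp [hz])
  · exact hre ▸ (div_pos hr hp).le
  · exact hre ▸ hs

lemma trace_tripleInterp_zero_eq_one (hb : b.PosSemidef) (hx : x.PosSemidef) (hy : y.PosSemidef)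
    (hp : 0 < p) (hq : 0 < q) (hr : 1 ≤ r) (hpqr : r / p + r / q = 1) (hxp : (mpow x p).trace = 1)
    (hyq : (mpow y q).trace = 1) (hbr : (mpow b r).trace = 1) (hK : ‖K‖ ≤ 1)
    (hKr : (tripleInterp b K x y r (1 - 1 / r)).trace = 1) :
    (tripleInterp b K x y r 0).trace = 1 := by
  obtain rfl | hr₁ := hr.eq_or_lt
  · simpa only [Complex.ofReal_one, div_one, sub_self] using hKr
  have hr₀ : 0 < r := one_pos.trans hr₁
  have hb₁ := norm_le_one_of_trace_mpow_eq_one hb hr₀ hbr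
  have hx₁ := norm_le_one_of_trace_mpow_eq_one hx hp hxp
  have hy₁ := norm_le_one_of_trace_mpow_eq_one hy hq hyq
  have hre : (1 - 1 / r : ℂ).re = 1 - 1 / r := by
    rw [← Complex.ofReal_one, ← Complex.ofReal_div, ← Complex.ofReal_sub, Complex.ofReal_re]
  have hmem : (1 - 1 / r : ℂ) ∈ verticalStrip 0 1 :=
    ⟨hre ▸ sub_pos.2 ((div_lt_one hr₀).2 hr₁), hre ▸ sub_lt_self 1 (one_div_pos.2 hr₀)⟩
  have hzero : (0 : ℂ) ∈ verticalClosedStrip 0 1 := ⟨le_rfl, zero_le_one⟩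
  exact (eqOn_verticalClosedStrip_of_norm_eq
    (differentiable_trace_tripleInterp b K x y r).diffContOnCl
    (bddAbove_norm_trace_of_norm_le_one fun _ =>
      norm_tripleInterp_le_one hb hx hy hb₁ hx₁ hy₁ hr₀.le hK)
    (fun _ => norm_trace_tripleInterp_le_one_of_re_eq_zero hb hx hy hp hq hr₀ hpqr hxp hyq hK)
    (fun _ => norm_trace_tripleInterp_le_one_of_re_eq_one hb hx hy hbr hK)
    hmem (by rw [hKr, norm_one]) hzero).trans hKr

lemma exists_norm_le_one_mul_eq_mpow_half (Z : Matrix m m ℂ) :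
    ∃ K : Matrix m m ℂ, ‖K‖ ≤ 1 ∧ K * Z = mpow (Zᴴ * Z) (1 / 2) := by
  have hZ : (Zᴴ * Z).PosSemidef := posSemidef_conjTranspose_mul_self Z
  set b := mpow (Zᴴ * Z) (1 / 2) with hb_def
  have hb : b.PosSemidef := posSemidef_mpow hZ _
  have hb_one : mcpow b 1 = b := mcpow_one hb.isHermitian
  have hbb : Zᴴ * Z = b * b := by
    rw [hb_def, mpow_half_mul_mpow_half hZ one_pos, ← mcpow_ofReal hZ one_ne_zero,
      Complex.ofReal_one, mcpow_one hZ.isHermitian]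
  have hKZ : mcpow b (-1) * (b * b) = b := by
    nth_rw 2 3 [← hb_one]
    rw [mcpow_mul_mcpow, mcpow_mul_mcpow, neg_add_cancel_left, hb_one]
  have hKK : mcpow b (-1) * Zᴴ * (mcpow b (-1) * Zᴴ)ᴴ = mcpow b 0 := by
    rw [conjTranspose_mul, conjTranspose_conjTranspose, conjTranspose_mcpow hb, star_neg, star_one]
    calc mcpow b (-1) * Zᴴ * (Z * mcpow b (-1))
        = mcpow b (-1) * (Zᴴ * Z) * mcpow b (-1) := by simp only [mul_assoc]
      _ = mcpow b 1 * mcpow b (-1) := by rw [hbb, hKZ, hb_one]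
      _ = mcpow b 0 := by rw [mcpow_mul_mcpow, add_neg_cancel]
  refine ⟨mcpow b (-1) * Zᴴ, ?_, ?_⟩
  · rw [← sq_le_one_iff₀ (norm_nonneg _), sq, ← CStarRing.norm_self_mul_star,
      star_eq_conjTranspose, hKK]
    exact norm_mcpow_le_one_of_re_eq_zero hb Complex.zero_re
  · rw [mul_assoc, hbb, hKZ]

lemma mpow_eq_mpow_of_trace_eq_one (hx : x.PosSemidef) (hy : y.PosSemidef) (hp : 0 < p)
    (hq : 0 < q) (hr : 1 ≤ r) (hpqr : r / p + r / q = 1) (hxp : (mpow x p).trace = 1)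
    (hyq : (mpow y q).trace = 1)
    (hxyr : (mpow (mpow ((x * y)ᴴ * (x * y)) (1 / 2)) r).trace = 1) :
    mpow x p = mpow y q := by
  have hr₀ : 0 < r := one_pos.trans_le hr
  obtain ⟨K, hK, hKxy⟩ := exists_norm_le_one_mul_eq_mpow_half (x * y)
  set b := mpow ((x * y)ᴴ * (x * y)) (1 / 2)
  have hb : b.PosSemidef := posSemidef_mpow (posSemidef_conjTranspose_mul_self _) _
  have hpoint : tripleInterp b K x y r (1 - 1 / r) = mpow b r := by
    have hr_ne : (r : ℂ) ≠ 0 := Complex.ofReal_ne_zero.2 hr₀.ne'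
    have hb_exp : (r : ℂ) * (1 - 1 / r) = r - 1 := by field_simp
    have hxy_exp : (r : ℂ) * (1 - (1 - 1 / r)) = 1 := by field_simp; ring
    rw [tripleInterp, hb_exp, hxy_exp, mcpow_one hx.isHermitian, mcpow_one hy.isHermitian,
      mul_assoc, mul_assoc, ← mul_assoc K, mul_assoc K, hKxy]
    nth_rw 2 [← mcpow_one hb.isHermitian]
    rw [mcpow_mul_mcpow, sub_add_cancel, mcpow_ofReal hb hr₀.ne']
  have hzero : (tripleInterp b K x y r 0).trace = 1 :=
    trace_tripleInterp_zero_eq_one hb hx hy hp hq hr hpqr hxp hyq hxyr hK (by rw [hpoint, hxyr])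
  rw [trace_tripleInterp_eq_trace_pairInterp hp.ne' hq.ne' hpqr] at hzero
  have hre : ((r / p : ℂ) * (1 - 0)).re = r / p := by
    rw [sub_zero, mul_one, ← Complex.ofReal_div, Complex.ofReal_re]
  refine mpow_eq_mpow_of_trace_pairInterp_eq_one hx hy hp hq hxp hyq
    (norm_mul_le_one (norm_mul_le_one ?_ ?_) hK) ⟨?_, ?_⟩ hzero
  · exact norm_mcpow_le_one_of_re_eq_zero hy (by rw [mul_zero, Complex.zero_re])
  · exact norm_mcpow_le_one_of_re_eq_zero hb (by rw [mul_zero, Complex.zero_re])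
  · exact hre ▸ div_pos hr₀ hp
  · exact hre ▸ by linarith [div_pos hr₀ hq]

end Holder

section Normalization

variable {m : Type*} [Fintype m] [DecidableEq m] {A x y : Matrix m m ℂ} {c p q r : ℝ}

lemma trace_mpow_smul_rpow (hA : A.PosSemidef) (hc : 0 ≤ c) (hp : p ≠ 0) :
    (mpow (c • A) p).trace.re ^ (1 / p) = c * (mpow A p).trace.re ^ (1 / p) := by
  have htr : 0 ≤ (mpow A p).trace.re :=
    (Complex.nonneg_iff.1 (posSemidef_mpow hA p).trace_nonneg).1
  rw [mpow_smul hA hc, trace_smul, Complex.smul_re, smul_eq_mul,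
    Real.mul_rpow (Real.rpow_nonneg hc p) htr, one_div, Real.rpow_rpow_inv hc hp]

lemma mpow_half_smul_conjTranspose_mul_self (Z : Matrix m m ℂ) (hc : 0 ≤ c) :
    mpow ((c • Z)ᴴ * (c • Z)) (1 / 2) = c • mpow (Zᴴ * Z) (1 / 2) := by
  have hsmul : (c • Z)ᴴ * (c • Z) = (c * c) • (Zᴴ * Z) := by
    rw [conjTranspose_smul, star_trivial, smul_mul_smul_comm]
  rw [hsmul, mpow_smul (posSemidef_conjTranspose_mul_self Z) (mul_nonneg hc hc),
    ← Real.sqrt_eq_rpow, Real.sqrt_mul_self hc]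

lemma trace_mpow_eq_one_of_rpow_eq_one (hA : A.PosSemidef) (hp : p ≠ 0)
    (h : (mpow A p).trace.re ^ (1 / p) = 1) : (mpow A p).trace = 1 := by
  obtain ⟨hre, him⟩ := Complex.nonneg_iff.1 (posSemidef_mpow hA p).trace_nonneg
  refine Complex.ext ?_ him.symm
  exact (Real.rpow_left_inj hre zero_le_one (one_div_ne_zero hp)).1 (h.trans (Real.one_rpow _).symm)

lemma exists_pos_trace_mpow_smul_eq_one (hA : A.PosSemidef) (hp : p ≠ 0) (hAp : mpow A p ≠ 0) :
    ∃ c : ℝ, 0 < c ∧ (mpow (c • A) p).trace = 1 := by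
  have htr : 0 < (mpow A p).trace.re := by
    have hpos := (posSemidef_mpow hA p).trace_nonneg.lt_of_ne'
      (mt (posSemidef_mpow hA p).trace_eq_zero_iff.1 hAp)
    exact (Complex.pos_iff.1 hpos).1
  have hnorm : 0 < (mpow A p).trace.re ^ (1 / p) := Real.rpow_pos_of_pos htr _
  refine ⟨((mpow A p).trace.re ^ (1 / p))⁻¹, inv_pos.2 hnorm, ?_⟩
  apply trace_mpow_eq_one_of_rpow_eq_one (hA.smul (inv_nonneg.2 hnorm.le)) hp
  rw [trace_mpow_smul_rpow hA (inv_nonneg.2 hnorm.le) hp, inv_mul_cancel₀ hnorm.ne']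

lemma schatten_holder_eq_smul {d : ℝ} (hx : x.PosSemidef) (hy : y.PosSemidef) (hc : 0 ≤ c)
    (hd : 0 ≤ d) (hp : p ≠ 0) (hq : q ≠ 0) (hr : r ≠ 0)
    (heq : (mpow (mpow ((x * y)ᴴ * (x * y)) (1 / 2)) r).trace.re ^ (1 / r) =
      (mpow x p).trace.re ^ (1 / p) * (mpow y q).trace.re ^ (1 / q)) :
    (mpow (mpow ((c • x * d • y)ᴴ * (c • x * d • y)) (1 / 2)) r).trace.re ^ (1 / r) =
      (mpow (c • x) p).trace.re ^ (1 / p) * (mpow (d • y) q).trace.re ^ (1 / q) := by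
  rw [smul_mul_smul_comm, mpow_half_smul_conjTranspose_mul_self _ (mul_nonneg hc hd),
    trace_mpow_smul_rpow (posSemidef_mpow (posSemidef_conjTranspose_mul_self _) _)
      (mul_nonneg hc hd) hr, trace_mpow_smul_rpow hx hc hp, trace_mpow_smul_rpow hy hd hq, heq,
    mul_mul_mul_comm]

end Normalization

theorem holder_equality_condition_general {m : Type*} [Fintype m] [DecidableEq m] {p q r : ℝ}
    (hp : 0 < p) (hq : 0 < q) (hr : 1 ≤ r) (hpqr : 1 / r = 1 / p + 1 / q)
    {x y : Matrix m m ℂ} (hx : x.PosSemidef) (hy : y.PosSemidef)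
    (heq : (mpow (mpow ((x * y)ᴴ * (x * y)) (1 / 2)) r).trace.re ^ (1 / r) =
      (mpow x p).trace.re ^ (1 / p) * (mpow y q).trace.re ^ (1 / q)) :
    ∃ lam : ℝ, 0 ≤ lam ∧ (mpow x p = lam • mpow y q ∨ mpow y q = lam • mpow x p) := by
  have hr₀ : 0 < r := one_pos.trans_le hr
  have hsum : r / p + r / q = 1 := by
    rw [← mul_one_div r p, ← mul_one_div r q, ← mul_add, ← hpqr, mul_one_div_cancel hr₀.ne']
  by_cases hxp : mpow x p = 0
  · exact ⟨0, le_rfl, Or.inl (by rw [hxp, zero_smul])⟩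
  by_cases hyq : mpow y q = 0
  · exact ⟨0, le_rfl, Or.inr (by rw [hyq, zero_smul])⟩
  obtain ⟨c, hc, hcx⟩ := exists_pos_trace_mpow_smul_eq_one hx hp.ne' hxp
  obtain ⟨d, hd, hdy⟩ := exists_pos_trace_mpow_smul_eq_one hy hq.ne' hyq
  have hcxdy := schatten_holder_eq_smul hx hy hc.le hd.le hp.ne' hq.ne' hr₀.ne' heq
  rw [hcx, hdy, Complex.one_re, Real.one_rpow, Real.one_rpow, mul_one] at hcxdy
  have hpow : c ^ p • mpow x p = d ^ q • mpow y q := by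
    rw [← mpow_smul hx hc.le, ← mpow_smul hy hd.le]
    exact mpow_eq_mpow_of_trace_eq_one (hx.smul hc.le) (hy.smul hd.le) hp hq hr hsum hcx hdy
      (trace_mpow_eq_one_of_rpow_eq_one
        (posSemidef_mpow (posSemidef_conjTranspose_mul_self _) _) hr₀.ne' hcxdy)
  refine ⟨(c ^ p)⁻¹ * d ^ q, by positivity, Or.inl ?_⟩
  rw [mul_smul, ← hpow, inv_smul_smul₀ (Real.rpow_pos_of_pos hc p).ne']

/-- Equality condition in Hölder's inequality for Schatten norms: if `x, y ≥ 0`,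
`1/r = 1/p + 1/q` with `p, q ∈ (1, ∞)`, `r ≥ 1`, and
`Tr(|xy|^r)^{1/r} = Tr(x^p)^{1/p} Tr(y^q)^{1/q}`, then `x^p` and `y^q` are
proportional. -/
theorem holder_equality_condition (n : ℕ) (p q r : ℝ)
    (hp : 1 < p) (hq : 1 < q) (hr : 1 ≤ r) (hpqr : 1 / r = 1 / p + 1 / q)
    (x y : Matrix (Fin n) (Fin n) ℂ) (hx : x.PosSemidef) (hy : y.PosSemidef)
    (heq : ((mpow (mpow ((x * y)ᴴ * (x * y)) (1 / 2)) r).trace).re ^ (1 / r)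
      = ((mpow x p).trace).re ^ (1 / p) * ((mpow y q).trace).re ^ (1 / q)) :
    ∃ lam : ℝ, 0 ≤ lam ∧
      (mpow x p = lam • mpow y q ∨ mpow y q = lam • mpow x p) :=
  holder_equality_condition_general (one_pos.trans hp) (one_pos.trans hq) hr hpqr hx hy heq
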